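/- Let C = F_1 + … + F_t (t ≥ 2) be a pseudo-simple f-minimal low degree unmixed ΣΠΣΠ(t) circuit of size s (s ≥ 2) over a sufficiently large (e.g. infinite) field F, where f is a nonconstant univariate low degree polynomial such that f is an indecomposable factor of the polynomial computed by C. Then ‖F_1‖_{var(f)} ≤ s^(5t²), where var(f) is the (singleton) set of variables on which f depends. -/

import Mathlib

open MvPolynomial Finset

attribute [local instance 10] Classical.propDecidable

/-- Embed a univariate polynomial as a multivariate polynomial in the variable `x j`. -/
noncomputable def toMv {F : Type*} [CommSemiring F] {n : ℕ} (j : Fin n) (f : Polynomial F) :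
    MvPolynomial (Fin n) F :=
  Polynomial.aeval (X j) f

/-- The sparsity `‖P‖`: the number of monomials of `P` with nonzero coefficient. -/
def sparsity {F : Type*} [CommSemiring F] {n : ℕ} (P : MvPolynomial (Fin n) F) : ℕ :=
  P.support.card

/-- `‖P‖_A`: the number of distinct exponent vectors of monomials of `P` after setting
the exponents of the variables indexed by `A` to zero. -/
noncomputable def sparsityOn {F : Type*} [CommSemiring F] {n : ℕ} (A : Finset (Fin n))
    (P : MvPolynomial (Fin n) F) : ℕ :=
  (P.support.image fun m => Finsupp.filter (fun j => j ∉ A) m).card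

/-- Substitute `c` for the variable `x i`. -/
noncomputable def substAt {F : Type*} [CommSemiring F] {n : ℕ} (i : Fin n) (c : F)
    (P : MvPolynomial (Fin n) F) : MvPolynomial (Fin n) F :=
  aeval (fun j : Fin n => if j = i then MvPolynomial.C c else X j) P

/-- Substitute `a j` for `x j` for all `j < t` (for `t = 0` this is `P` itself). -/
noncomputable def substPrefix {F : Type*} [CommSemiring F] {n : ℕ} (t : ℕ) (a : Fin n → F)
    (P : MvPolynomial (Fin n) F) : MvPolynomial (Fin n) F :=
  aeval (fun j : Fin n => if (j : ℕ) < t then MvPolynomial.C (a j) else X j) P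

/-- The operator `D_{x i = c}(P, Q) = P·(Q|_{x i = c}) − (P|_{x i = c})·Q`. -/
noncomputable def Dop {F : Type*} [CommRing F] {n : ℕ} (i : Fin n) (c : F)
    (P Q : MvPolynomial (Fin n) F) : MvPolynomial (Fin n) F :=
  P * substAt i c Q - substAt i c P * Q

/-- `f` (a univariate polynomial, placed in the variable `x i`) is an indecomposable factor
of `Q`: `Q = f(x i) · H` with `H` not depending on `x i`. -/
def IsIndecompFactor {F : Type*} [CommSemiring F] {n : ℕ} (i : Fin n) (f : Polynomial F)
    (Q : MvPolynomial (Fin n) F) : Prop :=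
  ∃ H : MvPolynomial (Fin n) F, Q = toMv i f * H ∧ i ∉ H.vars

/-- The set `S 1 ∩ ⋯ ∩ S k` where `S i = {g i 1 (x 1), …, g i n (x n)}`. -/
noncomputable def commonFactors {F : Type*} [CommSemiring F] {n k : ℕ}
    (g : Fin k → Fin n → Polynomial F) : Finset (MvPolynomial (Fin n) F) :=
  (Finset.univ.image fun x : Fin k × Fin n => toMv x.2 (g x.1 x.2)).filter
    fun p => ∀ i : Fin k, ∃ j : Fin n, toMv j (g i j) = p

/-- The pseudo greatest common divisor: the product of the polynomials in `S 1 ∩ ⋯ ∩ S k`. -/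
noncomputable def pseudoGcd {F : Type*} [CommSemiring F] {n k : ℕ}
    (g : Fin k → Fin n → Polynomial F) : MvPolynomial (Fin n) F :=
  ∏ p ∈ commonFactors g, p

/-! ### Abstract linear algebra: relations among product functions -/

/-- Relations `c` that hold as long as the coordinates outside `S` stay at the base point. -/
def relSub {F V ι J X : Type*} [Field F] [AddCommGroup V] [Module F V] [Fintype ι] [Fintype J]
    (h : J → X → ι → F) (a : J → X) (w : ι → V) (S : Finset J) : Submodule F (ι → F) where
  carrier := {c | ∀ x : J → X, (∀ j, j ∉ S → x j = a j) →
    ∑ i, (c i * ∏ j, h j (x j) i) • w i = 0}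
  add_mem' := by
    intro c c' hc hc' x hx
    have h1 := hc x hx
    have h2 := hc' x hx
    simp only [Pi.add_apply, add_mul, add_smul, Finset.sum_add_distrib, h1, h2, add_zero]
  zero_mem' := by
    intro x hx
    simp
  smul_mem' := by
    intro r c hc x hx
    have h1 := hc x hx
    simp only [Pi.smul_apply, smul_eq_mul, mul_assoc, mul_smul r, ← Finset.smul_sum]
    simp only [h1, smul_zero]

theorem exists_small_set {F V ι J X : Type*} [Field F] [AddCommGroup V] [Module F V]
    [Fintype ι] [Fintype J]
    (h : J → X → ι → F) (a : J → X) (ha : ∀ j i, h j (a j) i = 1) (w : ι → V)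
    (h1 : (1 : ι → F) ∈ relSub h a w Finset.univ)
    (hmin : ∀ A : Finset ι, A.Nonempty → A ≠ Finset.univ →
      (fun i => if i ∈ A then (1 : F) else 0) ∉ relSub h a w Finset.univ) :
    ∃ S : Finset J, S.card ≤ 2 * Fintype.card ι ∧
      ∀ j, j ∉ S → ∀ x i i', h j x i = h j x i' := by
  have hmono : ∀ S T : Finset J, S ⊆ T → relSub h a w T ≤ relSub h a w S := by
    intro S T hST c hc x hx
    exact hc x (fun j hj => hx j (fun hj' => hj (hST hj')))
  obtain ⟨S, -, hS⟩ := Finset.exists_min_image (Finset.univ : Finset (Finset J))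
    (fun S => S.card + 2 * Module.finrank F (relSub h a w S)) ⟨∅, Finset.mem_univ _⟩
  have hcl : ∀ j, j ∉ S → ∀ x, ∀ c ∈ relSub h a w S, (fun i => h j x i) * c ∈ relSub h a w S := by
    intro j hj x c hc
    have heq : relSub h a w (insert j S) = relSub h a w S := by
      by_contra hne
      have hlt : relSub h a w (insert j S) < relSub h a w S :=
        lt_of_le_of_ne (hmono _ _ (Finset.subset_insert _ _)) hne
      have := Submodule.finrank_lt_finrank_of_lt hlt
      have h2 := hS (insert j S) (Finset.mem_univ _)
      rw [Finset.card_insert_of_notMem hj] at h2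
      omega
    rw [← heq] at hc
    intro y hy
    have h3 := hc (Function.update y j x) (by
      intro k hk
      rw [Finset.mem_insert, not_or] at hk
      rw [Function.update_of_ne hk.1]
      exact hy k hk.2)
    rw [← h3]
    refine Finset.sum_congr rfl fun i _ => ?_
    congr 1
    rw [← Finset.mul_prod_erase Finset.univ _ (Finset.mem_univ j),
      ← Finset.mul_prod_erase Finset.univ (fun k => h k (Function.update y j x k) i)
        (Finset.mem_univ j), hy j hj, ha, Function.update_self]
    rw [Finset.prod_congr (s₁ := Finset.univ.erase j)
      (f := fun k => h k (Function.update y j x k) i) rfl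
      (fun k hk => by rw [Function.update_of_ne (Finset.ne_of_mem_erase hk)])]
    simp only [Pi.mul_apply]
    ring
  have hfull : relSub h a w S ≤ relSub h a w Finset.univ := by
    intro c hc x _
    have key : ∀ T : Finset J, (∀ j ∈ T, j ∉ S) →
        (fun i => ∏ j ∈ T, h j (x j) i) * c ∈ relSub h a w S := by
      intro T
      induction T using Finset.induction_on with
      | empty =>
        intro _
        convert hc using 1
        ext i
        simp
      | insert j T hjT ih =>
        intro hT
        have h4 := hcl j (hT j (Finset.mem_insert_self _ _)) (x j) _
          (ih (fun k hk => hT k (Finset.mem_insert_of_mem hk)))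
        convert h4 using 1
        ext i
        simp [Finset.prod_insert hjT, mul_assoc]
    have h5 := key Sᶜ (by simp) (S.piecewise x a) (by
      intro j hj
      simp [hj])
    rw [← h5]
    refine Finset.sum_congr rfl fun i _ => ?_
    congr 1
    have e1 : ∏ j, h j (S.piecewise x a j) i = ∏ j ∈ S, h j (x j) i := by
      rw [← Finset.prod_mul_prod_compl S]
      rw [Finset.prod_congr rfl (g := fun j => h j (x j) i) (fun j hj => by simp [hj]),
        Finset.prod_congr (s₁ := Sᶜ) rfl (g := fun j => (1 : F))
          (fun j hj => by
            have hj' := Finset.mem_compl.1 hj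
            simp [hj', ha])]
      simp
    rw [e1, ← Finset.prod_mul_prod_compl S (fun j => h j (x j) i)]
    simp only [Pi.mul_apply]
    ring
  refine ⟨S, ?_, ?_⟩
  · have h6 := hS ∅ (Finset.mem_univ _)
    have h7 := Submodule.finrank_le (relSub h a w (∅ : Finset J))
    rw [Module.finrank_fintype_fun_eq_card] at h7
    simp only [Finset.card_empty] at h6
    omega
  · intro j hj x i0 i1
    by_contra hne
    set u := fun i => h j x i with hu
    have hone : (1 : ι → F) ∈ relSub h a w S := hmono _ _ (Finset.subset_univ _) h1
    have key : ∀ T : Finset ι,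
        (fun i => ∏ k ∈ T, ((u i - u k) * (u i0 - u k)⁻¹)) ∈ relSub h a w S := by
      intro T
      induction T using Finset.induction_on with
      | empty =>
        convert hone using 1
        ext i
        simp
      | insert k T hkT ih =>
        have h8 := hcl j hj x _ ih
        have h9 := (relSub h a w S).smul_mem (u i0 - u k)⁻¹
          ((relSub h a w S).sub_mem h8 ((relSub h a w S).smul_mem (u k) ih))
        convert h9 using 1
        ext i
        simp only [Finset.prod_insert hkT, Pi.smul_apply, Pi.sub_apply, Pi.mul_apply, smul_eq_mul,
          hu]
        ring
    refine hmin (Finset.univ.filter fun i => u i = u i0) ⟨i0, by simp⟩ ?_ ?_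
    · intro hA
      have : i1 ∈ Finset.univ.filter fun i => u i = u i0 := by rw [hA]; exact Finset.mem_univ _
      exact hne (Finset.mem_filter.1 this).2.symm
    · have h10 := hfull (key (Finset.univ.filter fun i => u i ≠ u i0))
      convert h10 using 1
      ext i
      by_cases hi : u i = u i0
      · rw [if_pos (by simpa using hi)]
        symm
        refine Finset.prod_eq_one fun k hk => ?_
        rw [hi]
        exact mul_inv_cancel₀ (sub_ne_zero.2 (Ne.symm (Finset.mem_filter.1 hk).2))
      · rw [if_neg (by simpa using hi)]
        symm
        exact Finset.prod_eq_zero (i := i) (by simpa using hi) (by simp)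

/-! ### Facts on `toMv` -/

theorem eval_toMv {F : Type*} [Field F] {n : ℕ} (j : Fin n) (p : Polynomial F) (x : Fin n → F) :
    MvPolynomial.eval x (toMv j p) = p.eval (x j) := by
  unfold toMv
  have := Polynomial.aeval_algHom_apply (MvPolynomial.aeval x : MvPolynomial (Fin n) F →ₐ[F] F)
    (X j) p
  rw [MvPolynomial.aeval_X] at this
  rw [← MvPolynomial.coe_aeval_eq_eval]
  simpa [Polynomial.coe_aeval_eq_eval] using this.symm

theorem toMv_mem_supported {F : Type*} [Field F] {n : ℕ} (j d : Fin n) (hj : j ≠ d)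
    (p : Polynomial F) : toMv j p ∈ MvPolynomial.supported F ({d}ᶜ : Set (Fin n)) := by
  have h1 := Polynomial.aeval_mem_adjoin_singleton F (p := p) (X j : MvPolynomial (Fin n) F)
  refine Algebra.adjoin_le ?_ h1
  rintro _ rfl
  exact MvPolynomial.X_mem_supported.2 hj

theorem mem_support_toMv {F : Type*} [Field F] {n : ℕ} (j : Fin n) (p : Polynomial F)
    (m : Fin n →₀ ℕ) (hm : m ∈ (toMv j p).support) : ∃ e ∈ p.support, m = Finsupp.single j e := by
  unfold toMv at hm
  rw [Polynomial.aeval_eq_sum_range' (Nat.lt_succ_self _)] at hm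
  have h1 := MvPolynomial.support_sum hm
  rw [Finset.mem_biUnion] at h1
  obtain ⟨e, _, h2⟩ := h1
  rw [MvPolynomial.X_pow_eq_monomial, MvPolynomial.smul_monomial, MvPolynomial.mem_support_iff,
    MvPolynomial.coeff_monomial] at h2
  split_ifs at h2 with h3
  · refine ⟨e, ?_, h3.symm⟩
    rw [Polynomial.mem_support_iff]
    intro h4
    simp [h4] at h2
  · exact absurd rfl h2

theorem mem_support_prod_toMv {F : Type*} [Field F] {n : ℕ} (p : Fin n → Polynomial F)
    (T : Finset (Fin n)) : ∀ m ∈ (∏ j ∈ T, toMv j (p j)).support,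
      (∀ j ∈ T, m j ∈ (p j).support) ∧ ∀ j, j ∉ T → m j = 0 := by
  induction T using Finset.induction_on with
  | empty =>
    intro m hm
    rw [Finset.prod_empty, MvPolynomial.mem_support_iff, MvPolynomial.coeff_one] at hm
    have : m = 0 := by
      by_contra h
      exact hm (if_neg (fun h' => h h'.symm))
    simp [this]
  | insert k T hk ih =>
    intro m hm
    rw [Finset.prod_insert hk] at hm
    have h1 := MvPolynomial.support_mul _ _ hm
    rw [Finset.mem_add] at h1
    obtain ⟨b, hb, c, hc, rfl⟩ := h1
    obtain ⟨e, he, rfl⟩ := mem_support_toMv k (p k) b hb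
    obtain ⟨h2, h3⟩ := ih c hc
    constructor
    · intro j hj
      by_cases hjk : j = k
      · subst hjk
        rw [Finsupp.add_apply, Finsupp.single_eq_same, h3 j hk, add_zero]
        exact he
      · rw [Finsupp.add_apply, Finsupp.single_eq_of_ne hjk, zero_add]
        exact h2 j ((Finset.mem_insert.1 hj).resolve_left hjk)
    · intro j hj
      rw [Finset.mem_insert, not_or] at hj
      rw [Finsupp.add_apply, Finsupp.single_eq_of_ne hj.1, zero_add]
      exact h3 j hj.2

theorem sparsityOn_le_prod {F : Type*} [Field F] {n : ℕ} (p : Fin n → Polynomial F) (b : F)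
    (d : Fin n) (s : ℕ) (N : Finset (Fin n)) (hs : ∀ j, (p j).support.card ≤ s)
    (hN : ∀ j, j ≠ d → j ∉ N → p j = 1) (hs1 : 1 ≤ s) :
    sparsityOn {d} (MvPolynomial.C b * ∏ j, toMv j (p j)) ≤ s ^ N.card := by
  unfold sparsityOn
  set q : Fin n → Finset ℕ := fun j => if j = d then {0} else (p j).support with hq
  have h1 : ((MvPolynomial.C b * ∏ j, toMv j (p j)).support.image
      fun m => Finsupp.filter (fun j => j ∉ ({d} : Finset (Fin n))) m).card
        ≤ (Fintype.piFinset q).card := by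
    refine Finset.card_le_card_of_injOn (fun m => (m : Fin n → ℕ)) ?_
      (fun _ _ _ _ hxy => DFunLike.coe_injective hxy)
    intro m hm
    rw [Finset.mem_coe, Finset.mem_image] at hm
    obtain ⟨m', hm', rfl⟩ := hm
    rw [Finset.mem_coe, Fintype.mem_piFinset]
    have h2 : m' ∈ (∏ j, toMv j (p j)).support := by
      rw [MvPolynomial.mem_support_iff] at hm' ⊢
      intro h
      rw [MvPolynomial.coeff_C_mul, h, mul_zero] at hm'
      exact hm' rfl
    have h3 := (mem_support_prod_toMv p Finset.univ m' h2).1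
    intro j
    by_cases hj : j = d
    · simp [hq, hj]
    · have := h3 j (Finset.mem_univ _)
      simp only [hq, if_neg hj]
      rw [Finsupp.filter_apply_pos _ _ (by simpa using hj)]
      exact this
  refine h1.trans ?_
  rw [Fintype.card_piFinset, ← Finset.prod_mul_prod_compl N]
  have h4 : ∏ j ∈ N, (q j).card ≤ s ^ N.card := by
    refine Finset.prod_le_pow_card _ _ _ fun j _ => ?_
    simp only [hq]
    split_ifs
    · simpa using hs1
    · exact hs j
  have h5 : ∏ j ∈ Nᶜ, (q j).card = 1 := by
    refine Finset.prod_eq_one fun j hj => ?_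
    simp only [hq]
    split_ifs with hjd
    · simp
    · rw [hN j hjd (Finset.mem_compl.1 hj), ← Polynomial.C_1, Polynomial.support_C one_ne_zero]
      simp
  rw [h5, mul_one]
  exact h4

theorem eq_one_of_pseudoGcd {F : Type*} [Field F] {n t : ℕ} [NeZero t]
    (g : Fin t → Fin n → Polynomial F) (hmonic : ∀ i j, (g i j).Monic)
    (hps : pseudoGcd g = 1) (j : Fin n) (hj : ∀ i, g i j = g 0 j) : g 0 j = 1 := by
  have h1 : toMv j (g 0 j) ∈ commonFactors g := by
    unfold commonFactors
    rw [Finset.mem_filter, Finset.mem_image]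
    exact ⟨⟨(0, j), Finset.mem_univ _, rfl⟩, fun i => ⟨j, by rw [hj i]⟩⟩
  have h2 : toMv j (g 0 j) ∣ 1 := by
    rw [← hps]
    exact Finset.dvd_prod_of_mem (fun p => p) h1
  have h3 : IsUnit (g 0 j) := by
    have h4 := (isUnit_of_dvd_one h2).map
      (MvPolynomial.aeval (fun _ => Polynomial.X) : MvPolynomial (Fin n) F →ₐ[F] Polynomial F)
    unfold toMv at h4
    rw [← Polynomial.aeval_algHom_apply, MvPolynomial.aeval_X, Polynomial.aeval_X_left_apply] at h4
    exact h4
  exact (hmonic 0 j).eq_one_of_isUnit h3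

theorem exists_common_nonroot {F : Type*} [Field F] [Infinite F] {t : ℕ}
    (p : Fin t → Polynomial F) (hp : ∀ i, p i ≠ 0) : ∃ a, ∀ i, (p i).eval a ≠ 0 := by
  by_contra hcon
  push Not at hcon
  have h1 : ∏ i, p i = 0 := by
    refine Polynomial.funext fun a => ?_
    obtain ⟨i, hi⟩ := hcon a
    rw [Polynomial.eval_prod, Polynomial.eval_zero]
    exact Finset.prod_eq_zero (Finset.mem_univ i) hi
  exact Finset.prod_ne_zero_iff.2 (fun i _ => hp i) h1

theorem eval_term {F : Type*} [Field F] {n : ℕ} (b : F) (p : Fin n → Polynomial F) (d : Fin n)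
    (x : Fin n → F) : MvPolynomial.eval x (MvPolynomial.C b * ∏ j, toMv j (p j)) =
      (b * ∏ j ∈ Finset.univ.erase d, (p j).eval (x j)) * (p d).eval (x d) := by
  rw [map_mul, MvPolynomial.eval_C, map_prod]
  simp only [eval_toMv]
  rw [← Finset.mul_prod_erase Finset.univ _ (Finset.mem_univ d)]
  ring

/-- `f` is an indecomposable factor iff all specializations of the other variables give
scalar multiples of `f`. -/
theorem isIndecompFactor_iff {F : Type*} [Field F] [Infinite F] {n t : ℕ}
    (β : Fin t → F) (g : Fin t → Fin n → Polynomial F) (d : Fin n) (f : Polynomial F)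
    (hf : f ≠ 0) (A : Finset (Fin t)) :
    IsIndecompFactor d f (∑ i ∈ A, MvPolynomial.C (β i) * ∏ j : Fin n, toMv j (g i j)) ↔
    ∀ x : Fin n → F, ∑ i ∈ A, (β i * ∏ j ∈ Finset.univ.erase d, (g i j).eval (x j)) • g i d
      ∈ Submodule.span F {f} := by
  constructor
  · rintro ⟨H, hH, hd⟩ x
    rw [Submodule.mem_span_singleton]
    refine ⟨MvPolynomial.eval x H, Polynomial.funext fun y => ?_⟩
    have h1 := congrArg (MvPolynomial.eval (Function.update x d y)) hH
    rw [map_sum, map_mul, eval_toMv, Function.update_self] at h1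
    have h2 : MvPolynomial.eval (Function.update x d y) H = MvPolynomial.eval x H := by
      refine MvPolynomial.eval₂Hom_congr' rfl ?_ rfl
      intro k hk _
      rw [Function.update_of_ne]
      rintro rfl
      exact hd hk
    rw [h2] at h1
    rw [Polynomial.eval_smul, smul_eq_mul, mul_comm, ← h1, Polynomial.eval_finsetSum]
    refine Finset.sum_congr rfl fun i _ => ?_
    rw [eval_term _ _ d, Function.update_self, Polynomial.eval_smul, smul_eq_mul]
    congr 2
    refine Finset.prod_congr rfl fun k hk => ?_
    rw [Function.update_of_ne (Finset.ne_of_mem_erase hk)]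
  · intro hx
    refine ⟨∑ i ∈ A, MvPolynomial.C (β i * (g i d).coeff f.natDegree / f.leadingCoeff) *
      ∏ j ∈ Finset.univ.erase d, toMv j (g i j), ?_, ?_⟩
    · refine MvPolynomial.funext fun x => ?_
      obtain ⟨c, hc⟩ := Submodule.mem_span_singleton.1 (hx x)
      have h1 := congrArg (Polynomial.eval (x d)) hc
      have h2 := congrArg (fun p => Polynomial.coeff p f.natDegree) hc
      simp only [Polynomial.coeff_smul, Polynomial.finsetSum_coeff, smul_eq_mul,
        Polynomial.coeff_natDegree] at h2
      rw [Polynomial.eval_smul, Polynomial.eval_finsetSum, smul_eq_mul] at h1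
      rw [map_sum, map_mul, map_sum, eval_toMv]
      have hl : f.leadingCoeff ≠ 0 := Polynomial.leadingCoeff_ne_zero.2 hf
      have h3 : ∑ i ∈ A, MvPolynomial.eval x
          (MvPolynomial.C (β i * (g i d).coeff f.natDegree / f.leadingCoeff) *
            ∏ j ∈ Finset.univ.erase d, toMv j (g i j)) = c := by
        have h4 : c = (c * f.leadingCoeff) / f.leadingCoeff := by field_simp
        rw [h4, h2, Finset.sum_div]
        refine Finset.sum_congr rfl fun i _ => ?_
        rw [map_mul, MvPolynomial.eval_C, map_prod]
        simp only [eval_toMv]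
        ring
      rw [h3, mul_comm, h1]
      refine Finset.sum_congr rfl fun i _ => ?_
      rw [eval_term _ _ d, Polynomial.eval_smul, smul_eq_mul]
    · have h5 : (∑ i ∈ A, MvPolynomial.C (β i * (g i d).coeff f.natDegree / f.leadingCoeff) *
          ∏ j ∈ Finset.univ.erase d, toMv j (g i j)) ∈
            MvPolynomial.supported F ({d}ᶜ : Set (Fin n)) := by
        refine sum_mem fun i _ => mul_mem ?_ (prod_mem fun j hj => ?_)
        · exact (MvPolynomial.supported F ({d}ᶜ : Set (Fin n))).algebraMap_mem _
        · exact toMv_mem_supported j d (Finset.ne_of_mem_erase hj) _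
      intro h6
      have h7 := MvPolynomial.mem_supported.1 h5 h6
      exact h7 rfl

/-- Claim 3.1.3. Let `C = F 0 + ⋯ + F (t-1)` (`t ≥ 2`) be a
pseudo-simple `f`-minimal low degree unmixed ΣΠΣΠ(t) circuit of size `s ≥ 2` over an
infinite field, where `f` is a nonconstant univariate low degree polynomial in the
variable `x d` that is an indecomposable factor of the polynomial computed by `C`.
Then `‖F 1‖_{var f} ≤ s ^ (5 t²)`. -/
theorem sparsityOn_var_le_of_fMinimal
    {F : Type*} [Field F] [Infinite F] {n t s : ℕ} [NeZero t] (ht : 2 ≤ t) (hs : 2 ≤ s)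
    (β : Fin t → F) (hβ : ∀ i, β i ≠ 0)
    (g : Fin t → Fin n → Polynomial F)
    (hmonic : ∀ i j, (g i j).Monic)
    (hsize : ∀ i j, (g i j).support.card ≤ s)
    (Fp : Fin t → MvPolynomial (Fin n) F)
    (hFp : ∀ i, Fp i = MvPolynomial.C (β i) * ∏ j : Fin n, toMv j (g i j))
    (hlow : (∑ i, Fp i).totalDegree ≤ n)
    (hps : pseudoGcd g = 1)
    (d : Fin n) (f : Polynomial F) (hf : f.natDegree ≠ 0) (hflow : f.natDegree ≤ n)
    (hfmin : ∀ A : Finset (Fin t), A.Nonempty → A ≠ Finset.univ →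
      ¬ IsIndecompFactor d f (∑ i ∈ A, Fp i))
    (hfC : IsIndecompFactor d f (∑ i, Fp i)) :
    sparsityOn {d} (Fp 0) ≤ s ^ (5 * t ^ 2) := by
  have hf0 : f ≠ 0 := by
    rintro rfl
    exact hf Polynomial.natDegree_zero
  obtain rfl : Fp = fun i => MvPolynomial.C (β i) * ∏ j : Fin n, toMv j (g i j) := funext hFp
  choose a ha using fun j => exists_common_nonroot (fun i => g i j) (fun i => (hmonic i j).ne_zero)
  set h : Fin n → F → Fin t → F := fun j x i =>
    if j = d then 1 else (g i j).eval x / (g i j).eval (a j) with hh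
  have hh1 : ∀ j i, h j (a j) i = 1 := by
    intro j i
    simp only [hh]
    split_ifs
    · rfl
    · exact div_self (ha j i)
  set w : Fin t → (Polynomial F ⧸ Submodule.span F {f}) := fun i =>
    Submodule.Quotient.mk
      ((β i * ∏ j ∈ Finset.univ.erase d, (g i j).eval (a j)) • g i d) with hw
  have hrel : ∀ A : Finset (Fin t),
      (fun i => if i ∈ A then (1 : F) else 0) ∈ relSub h a w Finset.univ ↔
      IsIndecompFactor d f (∑ i ∈ A, MvPolynomial.C (β i) * ∏ j : Fin n, toMv j (g i j)) := by
    intro A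
    rw [isIndecompFactor_iff β g d f hf0 A]
    have hx : ∀ x : Fin n → F,
        ∑ i, ((if i ∈ A then (1 : F) else 0) * ∏ j, h j (x j) i) • w i =
        Submodule.Quotient.mk (p := Submodule.span F {f}) (∑ i ∈ A,
          (β i * ∏ j ∈ Finset.univ.erase d, (g i j).eval (x j)) • g i d) := by
      intro x
      have e1 : ∀ i, (∏ j, h j (x j) i) • w i = Submodule.Quotient.mk (p := Submodule.span F {f})
          ((β i * ∏ j ∈ Finset.univ.erase d, (g i j).eval (x j)) • g i d) := by
        intro i
        simp only [hw]
        rw [← Submodule.Quotient.mk_smul, smul_smul]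
        congr 2
        rw [← Finset.mul_prod_erase Finset.univ _ (Finset.mem_univ d)]
        have e2 : h d (x d) i = 1 := by simp [hh]
        rw [e2, one_mul, mul_left_comm, ← Finset.prod_mul_distrib]
        congr 1
        refine Finset.prod_congr rfl fun j hj => ?_
        simp only [hh, if_neg (Finset.ne_of_mem_erase hj)]
        exact div_mul_cancel₀ _ (ha j i)
      simp only [mul_smul, e1]
      rw [← Submodule.mkQ_apply, map_sum]
      simp [ite_smul, Finset.sum_ite_mem]
    constructor
    · intro hA x
      have := hA x (fun j hj => absurd (Finset.mem_univ j) hj)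
      rw [hx x] at this
      exact (Submodule.Quotient.mk_eq_zero _).1 this
    · intro hA x _
      rw [hx x]
      exact (Submodule.Quotient.mk_eq_zero _).2 (hA x)
  obtain ⟨S, hS, hS2⟩ := exists_small_set h a hh1 w
    (by
      have := (hrel Finset.univ).2 hfC
      convert this using 1
      ext i
      simp)
    (fun A hA hA' hmem => hfmin A hA hA' ((hrel A).1 (by convert hmem)))
  rw [Fintype.card_fin] at hS
  refine (sparsityOn_le_prod (g 0) (β 0) d s S (hsize 0) ?_ (by omega)).trans ?_
  · intro j hjd hj
    refine eq_one_of_pseudoGcd g hmonic hps j fun i => ?_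
    have h1 : Polynomial.C ((g i j).eval (a j))⁻¹ * g i j =
        Polynomial.C ((g 0 j).eval (a j))⁻¹ * g 0 j := by
      refine Polynomial.funext fun x => ?_
      have h2 := hS2 j hj x i 0
      simp only [hh, if_neg hjd] at h2
      rw [Polynomial.eval_C_mul, Polynomial.eval_C_mul, mul_comm, ← div_eq_mul_inv, h2,
        mul_comm, ← div_eq_mul_inv]
    have h3 := congrArg Polynomial.leadingCoeff h1
    rw [Polynomial.leadingCoeff_mul, Polynomial.leadingCoeff_mul, Polynomial.leadingCoeff_C,
      Polynomial.leadingCoeff_C, (hmonic i j).leadingCoeff, (hmonic 0 j).leadingCoeff,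
      mul_one, mul_one] at h3
    rw [h3] at h1
    exact mul_left_cancel₀ (Polynomial.C_ne_zero.2 (inv_ne_zero (ha j 0))) h1
  · refine Nat.pow_le_pow_right (by omega) (hS.trans ?_)
    nlinarith
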